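/- arXiv:2601.13906 — 2 statements merged into one kernel-verified Lean document; each statement's English description precedes it below -/
import Mathlib

section
/- For every r ≥ 2 and every mismatched pair {P, Q} of distinct r-patterns, any two distinct {P, Q}-cliques of the same size k whose edges partition [rk] have distinct traces (i.e., the family of {P, Q}-cliques is reconstructible from traces). -/
open Finset
open scoped Classical

/-- An ordered `r`-matching of size `n`: a partition of `[r*n] = {1,…,r*n}` into `n`
pairwise disjoint `r`-element subsets (the edges). -/
def IsOrderedMatching (r n : ℕ) (M : Finset (Finset ℕ)) : Prop :=
  M.card = n ∧ (∀ e ∈ M, e.card = r) ∧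
  (∀ e ∈ M, ∀ f ∈ M, e ≠ f → Disjoint e f) ∧
  M.biUnion id = Finset.Icc 1 (r * n)

/-- Two disjoint `r`-element sets `e`, `f` form the `r`-pattern `P`: the unique
order-preserving bijection from `e ∪ f` onto `[2r]` maps the pair `{e, f}` onto `P`. -/
def FormsPattern (r : ℕ) (e f : Finset ℕ) (P : Finset (Finset ℕ)) : Prop :=
  ∃ φ : ℕ → ℕ, StrictMonoOn φ ↑(e ∪ f) ∧
    (e ∪ f).image φ = Finset.Icc 1 (2 * r) ∧
    ({e.image φ, f.image φ} : Finset (Finset ℕ)) = P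

/-- A `Ps`-clique: a family of pairwise disjoint `r`-element subsets of `ℕ`, every two of
which form a pattern belonging to `Ps`. -/
def IsClique (r : ℕ) (Ps : Set (Finset (Finset ℕ))) (K : Finset (Finset ℕ)) : Prop :=
  (∀ e ∈ K, e.card = r) ∧ (∀ e ∈ K, ∀ f ∈ K, e ≠ f → Disjoint e f) ∧
  (∀ e ∈ K, ∀ f ∈ K, e ≠ f → ∃ P ∈ Ps, FormsPattern r e f P)

/-- `z_Ps(M)`: the maximum size of a subfamily of `M` that is a `Ps`-clique. -/
noncomputable def zClique (r : ℕ) (Ps : Set (Finset (Finset ℕ))) (M : Finset (Finset ℕ)) : ℕ :=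
  sSup {k | ∃ K : Finset (Finset ℕ), K ⊆ M ∧ IsClique r Ps K ∧ K.card = k}

/-- All ordered `r`-matchings of size `n` (as a finset). -/
noncomputable def matchingFamilies (r n : ℕ) : Finset (Finset (Finset ℕ)) :=
  ((Finset.Icc 1 (r * n)).powerset.powerset).filter (IsOrderedMatching r n)

/-- The probability of the event `A` for a uniformly random ordered `r`-matching of size `n`. -/
noncomputable def prob (r n : ℕ) (A : Finset (Finset ℕ) → Prop) : ℝ :=
  (((matchingFamilies r n).filter A).card : ℝ) / ((matchingFamilies r n).card : ℝ)

/-- Expectation of `X` with respect to a uniformly random ordered `r`-matching of size `n`. -/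
noncomputable def expect (r n : ℕ) (X : Finset (Finset ℕ) → ℝ) : ℝ :=
  (∑ M ∈ matchingFamilies r n, X M) / ((matchingFamilies r n).card : ℝ)

/-- An `r`-partite `r`-pattern: each edge contains exactly one of `{2i-1, 2i}` for each
`i = 1, …, r`. -/
def IsPartitePattern (r : ℕ) (P : Finset (Finset ℕ)) : Prop :=
  IsOrderedMatching r 2 P ∧
  ∀ e ∈ P, ∀ i ∈ Finset.Icc 1 r, (e ∩ {2 * i - 1, 2 * i}).card = 1

/-- An `r`-pattern `P` is collectable if there exist arbitrarily large `{P}`-cliques. -/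
def Collectable (r : ℕ) (P : Finset (Finset ℕ)) : Prop :=
  ∀ k : ℕ, ∃ K : Finset (Finset ℕ), IsClique r {P} K ∧ K.card = k

/-- The word of a pattern `P` over `{A=true, B=false}`: the `j`-th letter is `true` iff
vertex `j` lies in the edge of `P` containing `1`. -/
noncomputable def patternWord (r : ℕ) (P : Finset (Finset ℕ)) : List Bool :=
  (List.range (2 * r)).map (fun j => decide (∃ e ∈ P, 1 ∈ e ∧ j + 1 ∈ e))

/-- `lam` is a splitting of the word `w` into consecutive blocks of the form
`A^t B^t` or `B^t A^t` with half-lengths given by `lam`. -/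
def IsBlockSplitting (w : List Bool) (lam : List ℕ) : Prop :=
  (∀ t ∈ lam, 1 ≤ t) ∧
  ∃ bs : List Bool, bs.length = lam.length ∧
    w = (List.zipWith (fun t b => List.replicate t b ++ List.replicate t !b) lam bs).flatten

/-- The pattern `P` has composition `lam` (the sequence of half-lengths of the blocks of
its unique splitting). -/
def HasComposition (r : ℕ) (P : Finset (Finset ℕ)) (lam : List ℕ) : Prop :=
  IsBlockSplitting (patternWord r P) lam

/-- Two distinct collectable `r`-patterns are harmonious if they have the same composition. -/
def Harmonious (r : ℕ) (P Q : Finset (Finset ℕ)) : Prop :=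
  P ≠ Q ∧ Collectable r P ∧ Collectable r Q ∧
  ∃ lam : List ℕ, HasComposition r P lam ∧ HasComposition r Q lam

/-- A pair of distinct `r`-patterns is a mismatch if exactly one of them is collectable, or
both are collectable but their compositions differ. -/
def Mismatch (r : ℕ) (P Q : Finset (Finset ℕ)) : Prop :=
  P ≠ Q ∧
  ((Collectable r P ∧ ¬ Collectable r Q) ∨
   (¬ Collectable r P ∧ Collectable r Q) ∨
   (Collectable r P ∧ Collectable r Q ∧
     ¬ ∃ lam : List ℕ, HasComposition r P lam ∧ HasComposition r Q lam))

/-- The trace of an ordered `r`-matching of size `k` on `[rk]`: the `j`-th letter equals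
`i` when `j` is the `i`-th smallest element of the edge containing `j`. -/
noncomputable def trace (r k : ℕ) (M : Finset (Finset ℕ)) : List ℕ :=
  (List.range (r * k)).map (fun j₀ =>
    ((Finset.Icc 1 (r * k)).filter
      (fun x => x ≤ j₀ + 1 ∧ ∃ e ∈ M, j₀ + 1 ∈ e ∧ x ∈ e)).card)

/-- `a_Ps(k)`: the number of `Ps`-cliques of size `k` whose edges partition `[rk]`. -/
noncomputable def cliqueCount (r : ℕ) (Ps : Set (Finset (Finset ℕ))) (k : ℕ) : ℕ :=
  (((Finset.Icc 1 (r * k)).powerset.powerset).filter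
    (fun M => IsOrderedMatching r k M ∧ IsClique r Ps M)).card

/-- The maximum size of any `Ps`-clique whatsoever. -/
noncomputable def maxCliqueSize (r : ℕ) (Ps : Set (Finset (Finset ℕ))) : ℕ :=
  sSup {k | ∃ K : Finset (Finset ℕ), IsClique r Ps K ∧ K.card = k}

/-- `M` contains a copy of the ordered `r`-matching `H` of size `k`: a subfamily `N ⊆ M` of
`k` edges such that the order-preserving bijection from the union of the edges of `N`
onto `[rk]` maps `N` onto `H`. -/
def ContainsCopy (r k : ℕ) (H M : Finset (Finset ℕ)) : Prop :=
  ∃ N ⊆ M, N.card = k ∧ ∃ φ : ℕ → ℕ,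
    StrictMonoOn φ ↑(N.biUnion id) ∧
    (N.biUnion id).image φ = Finset.Icc 1 (r * k) ∧
    N.image (fun e => e.image φ) = H

/-- Delete the `j`-th smallest element of the finite set `e`. -/
def deleteJth (j : ℕ) (e : Finset ℕ) : Finset ℕ :=
  e.filter (fun x => (e.filter (· ≤ x)).card ≠ j)

/-- Relabel the elements of `e` order-preservingly by their ranks in `V`. -/
def relabel (V : Finset ℕ) (e : Finset ℕ) : Finset ℕ :=
  e.image (fun x => (V.filter (· ≤ x)).card)

/-- `S^(−j)`: delete from each edge of the pattern `S` its `j`-th smallest element and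
relabel the remaining vertices order-preservingly. -/
def patternDelete (j : ℕ) (S : Finset (Finset ℕ)) : Finset (Finset ℕ) :=
  (S.image (deleteJth j)).image (relabel ((S.image (deleteJth j)).biUnion id))

/-!
Call two levels `i` and `j` of a pair of edges separated if one edge has its whole segment between
these levels below the whole segment of the other. A pattern is collectable exactly when separation
is a transitive relation on its levels. Its classes are then intervals of levels, which are the
blocks of the pattern, so that they determine the composition. Hence two patterns form a mismatch
only if some levels `i < j` are separated in exactly one of them.

The trace says which vertices have a given level, and one has to find out which of them belong to
the same edge. At the levels `i` and `j` the pattern that separates them reads `AABB`. The other one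
reads `ABAB` or `ABBA`, and accordingly vertices of the two levels are joined first in, first out
or last in, first out. Now it is known which pairs of edges have separated levels `i` and `j`, that
is, which pattern each pair forms; together with the order of the edges at level `i`, this tells how
they are ordered at any other level.
-/

section Separation

variable {I α β : Type*} [LinearOrder α] [LinearOrder β]

/-- How the edge enumerated by `y` is threaded through the edge enumerated by `x`. For disjoint
edges with increasing enumerations this relation determines the pattern they form. -/
def interleaving (x y : I → α) (i j : I) : Prop := x i < y j

/-- The pairs `{x, y}` and `{p, q}` of enumerated edges form the same pattern; pairs are
unordered, so either assignment of `x`, `y` to `p`, `q` is allowed. -/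
def SamePattern (x y : I → α) (p q : I → β) : Prop :=
  interleaving x y = interleaving p q ∨ interleaving x y = interleaving q p

/-- The levels `i` and `j` of two edges are separated if one edge has its whole segment between
these levels below the whole segment of the other. For increasing enumerations this is the
equivalence below, which has the advantage of being visibly symmetric in `i` and `j`. -/
def Separated (x y : I → α) (i j : I) : Prop := x i < y j ↔ x j < y i

lemma interleaving_swap {x y : I → α} (h : ∀ i j, x i ≠ y j) (i j : I) :
    interleaving y x i j ↔ ¬ interleaving x y j i := by
  rw [interleaving, interleaving, not_lt]
  exact (Ne.symm (h j i)).le_iff_lt.symm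

lemma interleaving_eq_swap {x y : I → α} {p q : I → β}
    (hxy : ∀ i j, x i ≠ y j) (hpq : ∀ i j, p i ≠ q j)
    (h : interleaving x y = interleaving p q) : interleaving y x = interleaving q p := by
  funext i j
  rw [eq_iff_iff, interleaving_swap hxy, interleaving_swap hpq, h]

lemma separated_swap {x y : I → α} (h : ∀ i j, x i ≠ y j) {i j : I} :
    Separated y x i j ↔ Separated x y i j := by
  have hij := interleaving_swap h i j
  have hji := interleaving_swap h j i
  simp only [interleaving] at hij hji
  rw [Separated, Separated, hij, hji, not_iff_not]
  exact iff_comm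

lemma separated_congr {x y : I → α} {p q : I → β} (h : interleaving x y = interleaving p q)
    {i j : I} : Separated x y i j ↔ Separated p q i j :=
  iff_congr (iff_of_eq (congrFun₂ h i j)) (iff_of_eq (congrFun₂ h j i))

lemma SamePattern.separated_iff {x y : I → α} {p q : I → β} (h : SamePattern x y p q)
    (hpq : ∀ i j, p i ≠ q j) {i j : I} : Separated x y i j ↔ Separated p q i j := by
  rcases h with h | h
  · exact separated_congr h
  · rw [separated_congr h, separated_swap hpq]

variable [LinearOrder I]

lemma Separated.lt_iff_lt {x y : I → α} (hx : Monotone x) (hy : Monotone y) {i k : I}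
    (h : Separated x y i k) {l m : I} (hl : l ∈ Set.Icc i k) (hm : m ∈ Set.Icc i k) :
    x l < y m ↔ x i < y k := by
  refine ⟨fun hlm => ?_, fun hik => ?_⟩
  · exact (hx hl.1).trans_lt (hlm.trans_le (hy hm.2))
  · exact (hx hl.2).trans_lt ((h.1 hik).trans_le (hy hm.1))

lemma Separated.of_mem_Icc {x y : I → α} (hx : Monotone x) (hy : Monotone y) {i k : I}
    (h : Separated x y i k) {l m : I} (hl : l ∈ Set.Icc i k) (hm : m ∈ Set.Icc i k) :
    Separated x y l m :=
  (h.lt_iff_lt hx hy hl hm).trans (h.lt_iff_lt hx hy hm hl).symm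

lemma Separated.lt_self_iff {x y : I → α} (hx : Monotone x) (hy : Monotone y) {i j : I}
    (h : Separated x y i j) : x i < y j ↔ x i < y i := by
  rcases le_total i j with hij | hji
  · exact (h.lt_iff_lt hx hy ⟨le_rfl, hij⟩ ⟨le_rfl, hij⟩).symm
  · have h' : Separated x y j i := h.symm
    exact (h'.lt_iff_lt hx hy ⟨hji, le_rfl⟩ ⟨le_rfl, hji⟩).trans
      (h'.lt_iff_lt hx hy ⟨hji, le_rfl⟩ ⟨hji, le_rfl⟩).symm

lemma Separated.self_lt_self_iff {x y : I → α} (hx : Monotone x) (hy : Monotone y) {i j : I}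
    (h : Separated x y i j) : x i < y i ↔ x j < y j :=
  (h.lt_self_iff hx hy).symm.trans (Iff.trans h (Separated.lt_self_iff hx hy h.symm))

lemma lt_of_not_separated {x y : I → α} (hx : Monotone x) (hy : Monotone y) {i j : I}
    (hij : i ≤ j) (h : ¬ Separated x y i j) : x i < y j ∧ ¬ x j < y i := by
  have hlt : x j < y i → x i < y j := fun hji => (hx hij).trans_lt (hji.trans_le (hy hij))
  rw [Separated] at h
  tauto

end Separation

section Levels

/-- The arcs joining `a e` to `b e` do not cross: any two of them are nested or disjoint. -/
def Noncrossing {ι α : Type*} [LinearOrder α] (a b : ι → α) : Prop :=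
  ∀ e f, a e < a f → a f < b e → b f ≤ b e

lemma eq_of_range_eq_of_lt_iff_lt {ι α : Type*} [Finite ι] [LinearOrder α] {f g : ι → α}
    (hf : Function.Injective f) (hfg : Set.range f = Set.range g)
    (hlt : ∀ d e, f d < f e ↔ g d < g e) : f = g := by
  let := LinearOrder.lift' f hf
  have hf_mono : StrictMono f := fun _ _ h => h
  have hg_mono : StrictMono g := fun d e h => (hlt d e).1 h
  exact (hf_mono.range_inj hg_mono).1 hfg

/-- Reading from right to left, each opening point must be joined to the nearest closing point
that is still free. -/
lemma eq_of_range_eq_of_noncrossing {ι α : Type*} [Finite ι] [LinearOrder α] {a f g : ι → α}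
    (ha : Function.Injective a) (hf : Function.Injective f) (hg : Function.Injective g)
    (hfg : Set.range f = Set.range g) (haf : ∀ e, a e < f e) (hag : ∀ e, a e < g e)
    (hf_nc : Noncrossing a f) (hg_nc : Noncrossing a g) : f = g := by
  by_contra hne
  obtain ⟨e, he, hmax⟩ := Set.exists_max_image {e | f e ≠ g e} a (Set.toFinite _)
    (Function.ne_iff.1 hne)
  have no_gap : ∀ {u v : ι → α}, Function.Injective u → Set.range u = Set.range v →
      (∀ e, a e < u e) → Noncrossing a v → (∀ d, u d ≠ v d → a d ≤ a e) → ¬ u e < v e := by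
    intro u v hu huv hau hv hmax hlt
    obtain ⟨d, hd⟩ : u e ∈ Set.range v := huv ▸ Set.mem_range_self e
    have hde : d ≠ e := by rintro rfl; exact hlt.ne' hd
    have hud : u d ≠ v d := fun h => hde (hu (h.trans hd))
    have had : a d < a e := (hmax d hud).lt_of_ne (ha.ne hde)
    exact (hv d e had (hd ▸ hau e)).not_gt (hd ▸ hlt)
  rcases lt_or_gt_of_ne he with hlt | hlt
  · exact no_gap hf hfg haf hg_nc hmax hlt
  · exact no_gap hg hfg.symm hag hf_nc (fun d hd => hmax d hd.symm) hlt

end Levels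

section EdgeFamilies

variable {ι κ I α β : Type*} [LinearOrder α] [LinearOrder β]

/-- Every two edges of the family form the pattern `{p, q}` or the pattern `{p', q'}`. -/
def HasPatterns (x : ι → I → α) (p q p' q' : I → β) : Prop :=
  ∀ ⦃e f⦄, e ≠ f → SamePattern (x e) (x f) p q ∨ SamePattern (x e) (x f) p' q'

lemma HasPatterns.comp {x : ι → I → α} {p q p' q' : I → β} (hx : HasPatterns x p q p' q')
    {σ : κ → ι} (hσ : Function.Injective σ) : HasPatterns (x ∘ σ) p q p' q' :=
  fun _ _ hne => hx (hσ.ne hne)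

lemma HasPatterns.symm {x : ι → I → α} {p q p' q' : I → β} (hx : HasPatterns x p q p' q') :
    HasPatterns x p' q' p q :=
  fun _ _ hne => (hx hne).symm

lemma SamePattern.aligned_iff {x y : I → α} {p q : I → β} (h : SamePattern x y p q)
    (hpq : ∀ i j, p i ≠ q j) {i j : I} :
    (x i < y i ↔ x j < y j) ↔ (p i < q i ↔ p j < q j) := by
  rcases h with h | h
  · exact iff_congr (iff_of_eq (congrFun₂ h i i)) (iff_of_eq (congrFun₂ h j j))
  · refine (iff_congr (iff_of_eq (congrFun₂ h i i)) (iff_of_eq (congrFun₂ h j j))).trans ?_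
    rw [interleaving_swap hpq, interleaving_swap hpq, not_iff_not, interleaving, interleaving]

lemma SamePattern.interleaving_eq {x y x' y' : I → α} {p q : I → β}
    (h : SamePattern x y p q) (h' : SamePattern x' y' p q) (hpq : ∀ i j, p i ≠ q j) {i : I}
    (hi : x i < y i ↔ x' i < y' i) : interleaving x y = interleaving x' y' := by
  have hswap := interleaving_swap hpq i i
  have hi' : interleaving x y i i ↔ interleaving x' y' i i := hi
  rcases h with h | h <;> rcases h' with h' | h' <;> rw [h, h'] at hi' ⊢ <;> tauto

lemma interleaving_eq_of_separated_iff {x y x' y' : I → α} {p q p' q' : I → β}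
    (hpq : ∀ i j, p i ≠ q j) (hpq' : ∀ i j, p' i ≠ q' j) {i j : I}
    (hsep : Separated p q i j) (hsep' : ¬ Separated p' q' i j)
    (h : SamePattern x y p q ∨ SamePattern x y p' q')
    (h' : SamePattern x' y' p q ∨ SamePattern x' y' p' q')
    (hiff : Separated x y i j ↔ Separated x' y' i j) (hi : x i < y i ↔ x' i < y' i) :
    interleaving x y = interleaving x' y' := by
  rcases h with h | h <;> rcases h' with h' | h'
  · exact h.interleaving_eq h' hpq hi
  · rw [h.separated_iff hpq, h'.separated_iff hpq'] at hiff
    exact absurd (hiff.1 hsep) hsep'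
  · rw [h.separated_iff hpq', h'.separated_iff hpq] at hiff
    exact absurd (hiff.2 hsep) hsep'
  · exact h.interleaving_eq h' hpq' hi

variable [LinearOrder I]

/-- A family of pairwise disjoint edges, each given by its increasing enumeration; the value
`x e i` is the vertex of level `i` of the edge `e`. -/
structure IsEdgeFamily (x : ι → I → α) : Prop where
  strictMono : ∀ e, StrictMono (x e)
  ne : ∀ {e f}, e ≠ f → ∀ i j, x e i ≠ x f j

lemma IsEdgeFamily.injective {x : ι → I → α} (hx : IsEdgeFamily x) (i : I) :
    Function.Injective fun e => x e i :=
  fun _ _ h => by_contra fun hne => hx.ne hne i i h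

lemma IsEdgeFamily.comp {x : ι → I → α} (hx : IsEdgeFamily x) {σ : κ → ι}
    (hσ : Function.Injective σ) : IsEdgeFamily (x ∘ σ) :=
  ⟨fun e => hx.strictMono (σ e), fun hne => hx.ne (hσ.ne hne)⟩

lemma IsEdgeFamily.noncrossing {x : ι → I → α} (hx : IsEdgeFamily x) {i j : I} (hij : i ≤ j)
    (hpair : ∀ e f, e ≠ f → Separated (x e) (x f) i j ∨ ¬ (x e i < x f i ↔ x e j < x f j)) :
    Noncrossing (fun e => x e i) (fun e => x e j) := by
  intro e f hi hcross
  have hne : e ≠ f := by rintro rfl; exact hi.false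
  refine le_of_not_gt fun hj => ?_
  rcases hpair e f hne with hsep | hnest
  · exact hcross.not_gt (hsep.1 (hi.trans_le ((hx.strictMono f).monotone hij)))
  · exact hnest (iff_of_true hi hj)

/-- At the two levels separated by `{p, q}`, that pattern reads `AABB`. If `{p', q'}` keeps the
order of its edges between these levels then so do all pairs, and the levels are matched first in,
first out; otherwise no pair reads `ABAB`, and they are matched last in, first out. -/
lemma level_eq_of_separated [Finite ι] {x y : ι → I → α} {p q p' q' : I → β}
    (hx : IsEdgeFamily x) (hy : IsEdgeFamily y)
    (hx_pat : HasPatterns x p q p' q') (hy_pat : HasPatterns y p q p' q')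
    (hpq : ∀ i j, p i ≠ q j) (hpq' : ∀ i j, p' i ≠ q' j) {i j : I} (hij : i < j)
    (hsep : Separated p q i j) (hi : ∀ e, x e i = y e i)
    (hj : Set.range (fun e => x e j) = Set.range fun e => y e j) (e : ι) : x e j = y e j := by
  by_cases haligned : p' i < q' i ↔ p' j < q' j
  · have fifo : ∀ z : ι → I → α, IsEdgeFamily z → HasPatterns z p q p' q' →
        ∀ e f, z e i < z f i ↔ z e j < z f j := by
      intro z hz hz_pat e f
      rcases eq_or_ne e f with rfl | hne
      · simp only [lt_irrefl]
      · rcases hz_pat hne with h | h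
        · exact ((h.separated_iff hpq).2 hsep).self_lt_self_iff (hz.strictMono e).monotone
            (hz.strictMono f).monotone
        · exact (h.aligned_iff hpq').2 haligned
    refine congrFun (eq_of_range_eq_of_lt_iff_lt (hx.injective j) hj fun d e => ?_) e
    rw [← fifo x hx hx_pat, ← fifo y hy hy_pat, hi, hi]
  · have lifo : ∀ z : ι → I → α, IsEdgeFamily z → HasPatterns z p q p' q' →
        Noncrossing (fun e => z e i) (fun e => z e j) := fun z hz hz_pat =>
      hz.noncrossing hij.le fun e f hne => (hz_pat hne).imp (fun h => (h.separated_iff hpq).2 hsep)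
        fun h => (h.aligned_iff hpq').not.2 haligned
    have hlt : ∀ e, y e i < y e j := fun e => hy.strictMono e hij
    refine congrFun (eq_of_range_eq_of_noncrossing (hx.injective i) (hx.injective j)
      (hy.injective j) hj (fun e => hx.strictMono e hij) (fun e => ?_) (lifo x hx hx_pat) ?_) e
    · simpa only [hi] using hlt e
    · simpa only [hi] using lifo y hy hy_pat

/-- Once the levels `i` and `j` are matched alike, separation at these levels and the order at
level `i` tell how every two edges are interleaved, and hence the order at all other levels. -/
lemma eq_of_level_eq [Finite ι] {x y : ι → I → α} {p q p' q' : I → β}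
    (hx : IsEdgeFamily x) (hx_pat : HasPatterns x p q p' q') (hy_pat : HasPatterns y p q p' q')
    (hpq : ∀ i j, p i ≠ q j) (hpq' : ∀ i j, p' i ≠ q' j) {i j : I}
    (hsep : Separated p q i j) (hsep' : ¬ Separated p' q' i j)
    (hi : ∀ e, x e i = y e i) (hj : ∀ e, x e j = y e j)
    (hrange : ∀ m, Set.range (fun e => x e m) = Set.range fun e => y e m) : x = y := by
  funext e m
  refine congrFun (eq_of_range_eq_of_lt_iff_lt (hx.injective m) (hrange m) fun d e => ?_) e
  rcases eq_or_ne d e with rfl | hne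
  · simp only [lt_irrefl]
  · have hsep_iff : Separated (x d) (x e) i j ↔ Separated (y d) (y e) i j := by
      simp only [Separated, hi, hj]
    have hint := interleaving_eq_of_separated_iff hpq hpq' hsep hsep' (hx_pat hne) (hy_pat hne)
      hsep_iff (by rw [hi, hi])
    exact iff_of_eq (congrFun₂ hint m m)

theorem range_eq_of_not_separated_iff [Finite ι] {x : ι → I → α} {y : κ → I → α} {p q p' q' : I → β}
    (hx : IsEdgeFamily x) (hy : IsEdgeFamily y)
    (hx_pat : HasPatterns x p q p' q') (hy_pat : HasPatterns y p q p' q')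
    (hpq : ∀ i j, p i ≠ q j) (hpq' : ∀ i j, p' i ≠ q' j) {i j : I} (hij : i < j)
    (hsep_ne : ¬ (Separated p q i j ↔ Separated p' q' i j))
    (hrange : ∀ m, Set.range (fun e => x e m) = Set.range fun e => y e m) :
    Set.range x = Set.range y := by
  wlog hsep : Separated p q i j generalizing p q p' q'
  · exact this hx_pat.symm hy_pat.symm hpq' hpq (mt Iff.symm hsep_ne) ((not_iff.1 hsep_ne).1 hsep)
  have hsep' : ¬ Separated p' q' i j := fun h => hsep_ne (iff_of_true hsep h)
  let σ : ι ≃ κ := (Equiv.ofInjective _ (hx.injective i)).trans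
    ((Equiv.setCongr (hrange i)).trans (Equiv.ofInjective _ (hy.injective i)).symm)
  have hσ : ∀ e, x e i = y (σ e) i := fun e =>
    (Equiv.apply_ofInjective_symm (hy.injective i) ⟨x e i, hrange i ▸ Set.mem_range_self e⟩).symm
  have hrange_comp : ∀ m, Set.range (fun e => x e m) = Set.range fun e => (y ∘ σ) e m := fun m =>
    (hrange m).trans (σ.surjective.range_comp fun e => y e m).symm
  have hyσ := hy.comp σ.injective
  have hyσ_pat := hy_pat.comp σ.injective
  have hlevel := level_eq_of_separated hx hyσ hx_pat hyσ_pat hpq hpq' hij hsep hσ (hrange_comp j)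
  rw [eq_of_level_eq hx hx_pat hyσ_pat hpq hpq' hsep hsep' hσ hlevel hrange_comp,
    σ.surjective.range_comp]

end EdgeFamilies

section Blocks

variable {I α : Type*} [LinearOrder I] [LinearOrder α]

/-- The classes of `s` are intervals, called blocks. -/
def HasConvexClasses (s : Setoid I) : Prop :=
  ∀ ⦃i j k⦄, i ≤ j → j ≤ k → s i k → s i j

/-- Separation of levels as an equivalence relation, for patterns for which it is one. -/
def separationSetoid (x y : I → α) [IsTrans I (Separated x y)] : Setoid I where
  r := Separated x y
  iseqv := ⟨fun _ => Iff.rfl, Iff.symm, Trans.trans⟩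

lemma hasConvexClasses_of_separated {s : Setoid I} {x y : I → α} (hx : Monotone x)
    (hy : Monotone y) (hs : ∀ i j, s i j ↔ Separated x y i j) : HasConvexClasses s := by
  intro i j k hij hjk hik
  exact (hs i j).2 (((hs i k).1 hik).of_mem_Icc hx hy ⟨le_rfl, hij.trans hjk⟩ ⟨hij, hjk⟩)

lemma Separated.trans_of_le {x y : I → α} (hx : Monotone x) (hy : Monotone y)
    (h : ∀ ⦃i j k⦄, i ≤ j → j ≤ k → Separated x y i j → Separated x y j k → Separated x y i k)
    {i j k : I} (hij : Separated x y i j) (hjk : Separated x y j k) : Separated x y i k := by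
  wlog hik : i ≤ k generalizing i k
  · exact (this hjk.symm hij.symm (le_of_not_ge hik)).symm
  rcases le_total i j with h_ij | h_ji
  · rcases le_total j k with h_jk | h_kj
    · exact h h_ij h_jk hij hjk
    · exact hij.of_mem_Icc hx hy ⟨le_rfl, h_ij⟩ ⟨hik, h_kj⟩
  · exact hjk.of_mem_Icc hx hy ⟨h_ji, hik⟩ ⟨h_ji.trans hik, le_rfl⟩

variable [WellFoundedLT I]

/-- The first element of the block of `i`. -/
noncomputable def blockStart (s : Setoid I) (i : I) : I :=
  wellFounded_lt.min {l | s l i} ⟨i, s.refl i⟩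

lemma blockStart_rel (s : Setoid I) (i : I) : s (blockStart s i) i :=
  wellFounded_lt.min_mem {l | s l i} _

lemma blockStart_le_of_rel {s : Setoid I} {l i : I} (h : s l i) : blockStart s i ≤ l :=
  not_lt.1 (wellFounded_lt.not_lt_min {l | s l i} h)

lemma blockStart_le (s : Setoid I) (i : I) : blockStart s i ≤ i :=
  blockStart_le_of_rel (s.refl i)

lemma blockStart_eq_iff {s : Setoid I} {i j : I} : blockStart s i = blockStart s j ↔ s i j := by
  refine ⟨fun h => ?_, fun h => le_antisymm ?_ ?_⟩
  · exact s.trans (s.symm (blockStart_rel s i)) (h ▸ blockStart_rel s j)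
  · exact blockStart_le_of_rel (s.trans (blockStart_rel s j) (s.symm h))
  · exact blockStart_le_of_rel (s.trans (blockStart_rel s i) h)

lemma HasConvexClasses.blockStart_mono {s : Setoid I} (hs : HasConvexClasses s) :
    Monotone (blockStart s) := by
  intro i j hij
  rcases le_total i (blockStart s j) with h | h
  · exact (blockStart_le s i).trans h
  · exact (blockStart_eq_iff.2 (s.trans (s.symm (hs h hij (blockStart_rel s j)))
      (blockStart_rel s j))).le

lemma HasConvexClasses.blockStart_lt_iff {s : Setoid I} (hs : HasConvexClasses s) {i j : I} :
    blockStart s i < blockStart s j ↔ i < j ∧ ¬ s i j := by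
  refine ⟨fun h => ⟨hs.blockStart_mono.reflect_lt h, fun hij => ?_⟩, fun h => ?_⟩
  · exact h.ne (blockStart_eq_iff.2 hij)
  · exact (hs.blockStart_mono h.1.le).lt_of_ne fun heq => h.2 (blockStart_eq_iff.1 heq)

lemma lt_iff_blockStart_lt_or {s : Setoid I} {x y : I → α} (hx : Monotone x) (hy : Monotone y)
    (hs : ∀ i j, s i j ↔ Separated x y i j) {i j : I} :
    x i < y j ↔ blockStart s i < blockStart s j ∨ s i j ∧ x i < y i := by
  rw [(hasConvexClasses_of_separated hx hy hs).blockStart_lt_iff]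
  by_cases h : s i j
  · simp only [h, not_true_eq_false, and_false, true_and, false_or]
    exact ((hs i j).1 h).lt_self_iff hx hy
  · simp only [h, not_false_eq_true, and_true, false_and, or_false]
    rw [hs i j] at h
    rcases le_or_gt j i with hji | hij
    · exact iff_of_false (lt_of_not_separated hx hy hji (mt Iff.symm h)).2 hji.not_gt
    · exact iff_of_true (lt_of_not_separated hx hy hij.le h).1 hij

end Blocks

section Collectability

variable {I α β : Type*} [LinearOrder I] [LinearOrder α] [LinearOrder β]

/-- The vertex `y j` lies between `x k` and `z i`. -/
lemma Separated.trans_of_lt_of_lt {x y z : I → α} (hx : Monotone x) (hy : Monotone y)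
    (hz : Monotone z) {i j k : I} (hij : i ≤ j) (hjk : j ≤ k) (hxy : Separated x y j k)
    (hyz : Separated y z i j) (hxy_lt : x j < y j) (hyz_lt : y j < z j) : Separated x z i k := by
  have hxz : x k < z i :=
    (hxy.1 (hxy_lt.trans_le (hy hjk))).trans (hyz.1 ((hy hij).trans_lt hyz_lt))
  have hik := hij.trans hjk
  exact iff_of_true ((hx hik).trans_lt (hxz.trans_le (hz hik))) hxz

/-- The three edges are sorted by their vertices at the middle level. -/
lemma isTrans_separated_of_samePattern {x : Fin 3 → I → α} {p q : I → β}
    (hx : IsEdgeFamily x) (hp : Monotone p) (hq : Monotone q) (hpq : ∀ i j, p i ≠ q j)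
    (hpat : ∀ a b, a ≠ b → SamePattern (x a) (x b) p q) : IsTrans I (Separated p q) := by
  refine ⟨fun _ _ _ => Separated.trans_of_le hp hq fun i j k hij hjk hsep_ij hsep_jk => ?_⟩
  let σ := Tuple.sort fun a => x a j
  have hmono := fun a => (hx.strictMono (σ a)).monotone
  have hlt : StrictMono fun a => x (σ a) j :=
    (Tuple.monotone_sort fun a => x a j).strictMono_of_injective
      ((hx.injective j).comp σ.injective)
  have hsep : ∀ {a b l m}, a ≠ b → (Separated (x (σ a)) (x (σ b)) l m ↔ Separated p q l m) :=
    fun hne => (hpat _ _ (σ.injective.ne hne)).separated_iff hpq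
  exact (hsep (by decide)).1 <| Separated.trans_of_lt_of_lt (hmono 0) (hmono 1) (hmono 2) hij hjk
    ((hsep (by decide)).2 hsep_jk) ((hsep (by decide)).2 hsep_ij)
    (hlt (by decide)) (hlt (by decide))

variable [WellFoundedLT I]

/-- Where the `a`-th of `k` edges puts its vertex of level `i`: first come the blocks, then, inside
a block, the segments of the edges, in the order that `p` and `q` have there. -/
noncomputable def stackedEdge (s : Setoid I) (p q : I → β) {k : ℕ} (a : Fin k) (i : I) :
    I ×ₗ Fin k ×ₗ I :=
  toLex (blockStart s i, toLex (if p i < q i then a else a.rev, i))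

variable {s : Setoid I} {p q : I → β} (hp : Monotone p) (hq : Monotone q)
  (hs : ∀ i j, s i j ↔ Separated p q i j) {k : ℕ}
include hp hq hs

lemma stackedEdge_strictMono (a : Fin k) : StrictMono (stackedEdge s p q a) := by
  intro i j hij
  simp only [stackedEdge, Prod.Lex.toLex_lt_toLex]
  rcases ((hasConvexClasses_of_separated hp hq hs).blockStart_mono hij.le).lt_or_eq with h | h
  · exact Or.inl h
  · have hself := ((hs i j).1 (blockStart_eq_iff.1 h)).self_lt_self_iff hp hq
    exact Or.inr ⟨h, Or.inr ⟨by simp only [hself], hij⟩⟩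

lemma stackedEdge_lt_stackedEdge {a b : Fin k} (hab : a < b) {i j : I} :
    stackedEdge s p q a i < stackedEdge s p q b j ↔ p i < q j := by
  rw [lt_iff_blockStart_lt_or hp hq hs]
  simp only [stackedEdge, Prod.Lex.toLex_lt_toLex, blockStart_eq_iff]
  refine or_congr_right (and_congr_right fun hij => ?_)
  have hself := ((hs i j).1 hij).self_lt_self_iff hp hq
  by_cases h : p i < q i
  · rw [if_pos h, if_pos (hself.1 h)]
    exact iff_of_true (Or.inl hab) h
  · rw [if_neg h, if_neg (hself.not.1 h), Fin.rev_lt_rev, Fin.rev_inj]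
    exact iff_of_false (not_or.2 ⟨hab.not_gt, fun h' => hab.ne h'.1⟩) h

lemma isEdgeFamily_stackedEdge : IsEdgeFamily (stackedEdge s p q : Fin k → I → _) := by
  refine ⟨stackedEdge_strictMono hp hq hs, fun {a b} hab i j h => hab ?_⟩
  simp only [stackedEdge, toLex_inj, Prod.mk.injEq] at h
  obtain ⟨-, h, rfl⟩ := h
  split_ifs at h
  · exact h
  · exact Fin.rev_inj.1 h

lemma samePattern_stackedEdge {a b : Fin k} (hab : a ≠ b) (hpq : ∀ i j, p i ≠ q j) :
    SamePattern (stackedEdge s p q a) (stackedEdge s p q b) p q := by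
  rcases hab.lt_or_gt with h | h
  · exact Or.inl (funext₂ fun i j => propext (stackedEdge_lt_stackedEdge hp hq hs h))
  · refine Or.inr (funext₂ fun i j => propext ?_)
    rw [interleaving_swap ((isEdgeFamily_stackedEdge hp hq hs).ne h.ne), interleaving_swap hpq,
      not_iff_not]
    exact stackedEdge_lt_stackedEdge hp hq hs h

end Collectability

section Patterns

variable {α : Type*} [LinearOrder α] {r s : ℕ}

lemma eq_of_image_eq {x y : Fin r → α} (hx : StrictMono x) (hy : StrictMono y)
    (h : univ.image x = univ.image y) : x = y :=
  (hx.range_inj hy).1 (by simpa only [← coe_inj, coe_image, coe_univ, Set.image_univ] using h)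

lemma card_image_filter_le {x : Fin r → α} (hx : StrictMono x) (m : Fin r) :
    #{a ∈ univ.image x | a ≤ x m} = m + 1 := by
  simp only [filter_image, card_image_of_injective _ hx.injective, hx.le_iff_le, filter_ge_eq_Iic,
    Fin.card_Iic]

lemma card_union_filter_le {x : Fin r → α} {y : Fin s → α} (hx : StrictMono x)
    (hy : StrictMono y) (hxy : ∀ i j, x i ≠ y j) (m : Fin r) :
    #{a ∈ univ.image x ∪ univ.image y | a ≤ x m} = m + 1 + #{l | y l < x m} := by
  have hdisj : Disjoint (univ.image x) (univ.image y) := by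
    simpa [disjoint_left] using fun i j h => hxy i j h.symm
  rw [filter_union, card_union_of_disjoint (disjoint_filter_filter hdisj),
    card_image_filter_le hx, filter_image, card_image_of_injective _ hy.injective]
  simp only [fun l => (hxy m l).symm.le_iff_lt]

/-- The edges enumerated by `p` and `q` are the edges of an `r`-pattern. -/
structure IsPatternPair (p q : Fin r → ℕ) : Prop where
  strictMono_left : StrictMono p
  strictMono_right : StrictMono q
  ne : ∀ i j, p i ≠ q j
  union_eq : univ.image p ∪ univ.image q = Icc 1 (2 * r)

namespace IsPatternPair

variable {p q : Fin r → ℕ}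

lemma symm (h : IsPatternPair p q) : IsPatternPair q p :=
  ⟨h.strictMono_right, h.strictMono_left, fun i j => (h.ne j i).symm,
    (union_comm _ _).trans h.union_eq⟩

lemma left_mem_Icc (h : IsPatternPair p q) (m : Fin r) : p m ∈ Icc 1 (2 * r) :=
  h.union_eq ▸ mem_union_left _ (mem_image_of_mem p (mem_univ m))

lemma left_eq (h : IsPatternPair p q) (m : Fin r) : p m = m + 1 + #{l | q l < p m} := by
  have hfilter : {n ∈ Icc 1 (2 * r) | n ≤ p m} = Icc 1 (p m) := by
    ext n
    have := (mem_Icc.1 (h.left_mem_Icc m)).2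
    simp only [mem_filter, mem_Icc]
    lia
  rw [← card_union_filter_le h.strictMono_left h.strictMono_right h.ne, h.union_eq, hfilter,
    Nat.card_Icc, Nat.add_sub_cancel]

lemma rank_eq_left (h : IsPatternPair p q) {x y : Fin r → α} (hx : StrictMono x)
    (hy : StrictMono y) (hxy : ∀ i j, x i ≠ y j) (hint : interleaving x y = interleaving p q)
    (m : Fin r) : #{a ∈ univ.image x ∪ univ.image y | a ≤ x m} = p m := by
  have hlt : ∀ l, y l < x m ↔ q l < p m := fun l =>
    iff_of_eq (congrFun₂ (interleaving_eq_swap hxy h.ne hint) l m)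
  simp only [card_union_filter_le hx hy hxy, hlt]
  exact (h.left_eq m).symm

lemma formsPattern_of_interleaving_eq (h : IsPatternPair p q) {x y : Fin r → ℕ}
    (hx : StrictMono x) (hy : StrictMono y) (hxy : ∀ i j, x i ≠ y j)
    (hint : interleaving x y = interleaving p q) :
    FormsPattern r (univ.image x) (univ.image y) {univ.image p, univ.image q} := by
  let rank : ℕ → ℕ := fun n => #{a ∈ univ.image x ∪ univ.image y | a ≤ n}
  have hleft : (univ.image x).image rank = univ.image p := by
    rw [image_image]
    exact image_congr fun m _ => h.rank_eq_left hx hy hxy hint m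
  have hright : (univ.image y).image rank = univ.image q := by
    rw [image_image]
    refine image_congr fun m _ => ?_
    rw [Function.comp_apply, ← h.symm.rank_eq_left hy hx (fun i j => (hxy j i).symm)
      (interleaving_eq_swap hxy h.ne hint) m, union_comm]
  refine ⟨rank, fun a _ b hb hab => card_lt_card ?_, ?_, by rw [hleft, hright]⟩
  · exact (ssubset_iff_of_subset (monotone_filter_right _ fun c _ hc => hc.trans hab.le)).2
      ⟨b, mem_filter.2 ⟨hb, le_rfl⟩, fun hb' => hab.not_ge (mem_filter.1 hb').2⟩
  · rw [image_union, hleft, hright, h.union_eq]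

lemma formsPattern_of_samePattern (h : IsPatternPair p q) {x y : Fin r → ℕ}
    (hx : StrictMono x) (hy : StrictMono y) (hxy : ∀ i j, x i ≠ y j)
    (hpat : SamePattern x y p q) :
    FormsPattern r (univ.image x) (univ.image y) {univ.image p, univ.image q} := by
  rcases hpat with hpat | hpat
  · exact h.formsPattern_of_interleaving_eq hx hy hxy hpat
  · rw [pair_comm]
    exact h.symm.formsPattern_of_interleaving_eq hx hy hxy hpat

end IsPatternPair

lemma samePattern_of_formsPattern {x y p q : Fin r → ℕ} (hx : StrictMono x) (hy : StrictMono y)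
    (hp : StrictMono p) (hq : StrictMono q)
    (h : FormsPattern r (univ.image x) (univ.image y) {univ.image p, univ.image q}) :
    SamePattern x y p q := by
  obtain ⟨φ, hφ, -, hpair⟩ := h
  have hx_mem : ∀ i, x i ∈ (↑(univ.image x ∪ univ.image y) : Set ℕ) := fun i =>
    mem_union_left _ (mem_image_of_mem x (mem_univ i))
  have hy_mem : ∀ i, y i ∈ (↑(univ.image x ∪ univ.image y) : Set ℕ) := fun i =>
    mem_union_right _ (mem_image_of_mem y (mem_univ i))
  have hφx : StrictMono (φ ∘ x) := fun i j hij => hφ (hx_mem i) (hx_mem j) (hx hij)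
  have hφy : StrictMono (φ ∘ y) := fun i j hij => hφ (hy_mem i) (hy_mem j) (hy hij)
  have hint : interleaving x y = interleaving (φ ∘ x) (φ ∘ y) :=
    funext₂ fun i j => propext (hφ.lt_iff_lt (hx_mem i) (hy_mem j)).symm
  rw [image_image, image_image, ← coe_inj, coe_pair, coe_pair, Set.pair_eq_pair_iff] at hpair
  rw [SamePattern, hint]
  rcases hpair with ⟨h₁, h₂⟩ | ⟨h₁, h₂⟩
  · rw [eq_of_image_eq hφx hp h₁, eq_of_image_eq hφy hq h₂]
    exact Or.inl rfl
  · rw [eq_of_image_eq hφx hq h₁, eq_of_image_eq hφy hp h₂]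
    exact Or.inr rfl

end Patterns

section Cliques

variable {r : ℕ}

/-- The family of the increasing enumerations of the edges in `K`. -/
def enumeration {K : Finset (Finset ℕ)} (hK : ∀ e ∈ K, #e = r) (e : K) : Fin r → ℕ :=
  e.1.orderEmbOfFin (hK e e.2)

lemma image_enumeration {K : Finset (Finset ℕ)} (hK : ∀ e ∈ K, #e = r) (e : K) :
    univ.image (enumeration hK e) = e :=
  image_orderEmbOfFin_univ _ _

lemma isEdgeFamily_enumeration {K : Finset (Finset ℕ)} (hK : ∀ e ∈ K, #e = r)
    (hdisj : ∀ e ∈ K, ∀ f ∈ K, e ≠ f → Disjoint e f) : IsEdgeFamily (enumeration hK) where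
  strictMono e := (e.1.orderEmbOfFin (hK e e.2)).strictMono
  ne {e f} hne i j := disjoint_iff_ne.1 (hdisj e e.2 f f.2 (Subtype.coe_ne_coe.2 hne)) _
    (orderEmbOfFin_mem _ _ i) _ (orderEmbOfFin_mem _ _ j)

lemma eq_of_range_enumeration_eq {M N : Finset (Finset ℕ)} (hM : ∀ e ∈ M, #e = r)
    (hN : ∀ e ∈ N, #e = r) (h : Set.range (enumeration hM) = Set.range (enumeration hN)) :
    M = N := by
  have himage : ∀ {K : Finset (Finset ℕ)} (hK : ∀ e ∈ K, #e = r),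
      (K : Set (Finset ℕ)) = (fun x => univ.image x) '' Set.range (enumeration hK) := by
    intro K hK
    simp only [← Set.range_comp, Function.comp_def, image_enumeration]
    exact Subtype.range_coe.symm
  rw [← coe_inj, himage hM, himage hN, h]

lemma samePattern_enumeration {K : Finset (Finset ℕ)} (hK : ∀ e ∈ K, #e = r) {p q : Fin r → ℕ}
    (hp : StrictMono p) (hq : StrictMono q) {e f : K}
    (h : FormsPattern r e f {univ.image p, univ.image q}) :
    SamePattern (enumeration hK e) (enumeration hK f) p q := by
  rw [← image_enumeration hK e, ← image_enumeration hK f] at h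
  exact samePattern_of_formsPattern (orderEmbOfFin _ _).strictMono (orderEmbOfFin _ _).strictMono
    hp hq h

lemma IsClique.hasPatterns_enumeration {K : Finset (Finset ℕ)} {p q p' q' : Fin r → ℕ}
    (h : IsClique r {{univ.image p, univ.image q}, {univ.image p', univ.image q'}} K)
    (hpq : IsPatternPair p q) (hpq' : IsPatternPair p' q') :
    HasPatterns (enumeration h.1) p q p' q' := by
  intro e f hne
  obtain ⟨P, rfl | rfl, hP⟩ := h.2.2 e e.2 f f.2 (Subtype.coe_ne_coe.2 hne)
  · exact Or.inl (samePattern_enumeration h.1 hpq.strictMono_left hpq.strictMono_right hP)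
  · exact Or.inr (samePattern_enumeration h.1 hpq'.strictMono_left hpq'.strictMono_right hP)

lemma Collectable.isTrans_separated {p q : Fin r → ℕ} (hpq : IsPatternPair p q)
    (h : Collectable r {univ.image p, univ.image q}) : IsTrans (Fin r) (Separated p q) := by
  obtain ⟨K, ⟨hcard, hdisj, hpat⟩, hK⟩ := h 3
  let σ := K.equivFinOfCardEq hK
  refine isTrans_separated_of_samePattern
    ((isEdgeFamily_enumeration hcard hdisj).comp σ.symm.injective)
    hpq.strictMono_left.monotone hpq.strictMono_right.monotone hpq.ne fun a b hab => ?_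
  obtain ⟨P, rfl, hP⟩ := hpat _ (σ.symm a).2 _ (σ.symm b).2
    (Subtype.coe_ne_coe.2 (σ.symm.injective.ne hab))
  exact samePattern_enumeration hcard hpq.strictMono_left hpq.strictMono_right hP

lemma IsEdgeFamily.map {ι I α β : Type*} [LinearOrder I] [LinearOrder α] [LinearOrder β]
    {x : ι → I → α} (hx : IsEdgeFamily x) {φ : α → β} (hφ : StrictMono φ) :
    IsEdgeFamily fun e => φ ∘ x e :=
  ⟨fun e => hφ.comp (hx.strictMono e), fun hne i j => hφ.injective.ne (hx.ne hne i j)⟩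

lemma SamePattern.map {I α β γ : Type*} [LinearOrder α] [LinearOrder β] [LinearOrder γ]
    {x y : I → α} {p q : I → β} (h : SamePattern x y p q) {φ : α → γ} (hφ : StrictMono φ) :
    SamePattern (φ ∘ x) (φ ∘ y) p q := by
  have hint : interleaving (φ ∘ x) (φ ∘ y) = interleaving x y :=
    funext₂ fun i j => propext hφ.lt_iff_lt
  rwa [SamePattern, hint]

lemma IsPatternPair.isClique_image {p q : Fin r → ℕ} (hpq : IsPatternPair p q) {ι : Type*}
    [Fintype ι] {x : ι → Fin r → ℕ} (hx : IsEdgeFamily x)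
    (hpat : ∀ a b, a ≠ b → SamePattern (x a) (x b) p q) :
    IsClique r {{univ.image p, univ.image q}} (univ.image fun a => univ.image (x a)) := by
  simp only [IsClique, mem_image, mem_univ, true_and, forall_exists_index,
    forall_apply_eq_imp_iff, Set.mem_singleton_iff, exists_eq_left]
  refine ⟨fun a => ?_, fun a b hne => ?_, fun a b hne => ?_⟩
  · rw [card_image_of_injective _ (hx.strictMono a).injective, card_univ, Fintype.card_fin]
  · have hab : a ≠ b := fun h => hne (h ▸ rfl)
    simpa [disjoint_left] using fun i j h => hx.ne hab i j h.symm
  · have hab : a ≠ b := fun h => hne (h ▸ rfl)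
    exact hpq.formsPattern_of_samePattern (hx.strictMono a) (hx.strictMono b) (hx.ne hab)
      (hpat a b hab)

theorem collectable_iff_isTrans_separated {p q : Fin r → ℕ} (hpq : IsPatternPair p q)
    (hr : 0 < r) :
    Collectable r {univ.image p, univ.image q} ↔ IsTrans (Fin r) (Separated p q) := by
  refine ⟨Collectable.isTrans_separated hpq, fun htrans k => ?_⟩
  have hp := hpq.strictMono_left.monotone
  have hq := hpq.strictMono_right.monotone
  have hs : ∀ i j, separationSetoid p q i j ↔ Separated p q i j := fun _ _ => Iff.rfl
  let φ := (monoEquivOfFin (Fin r ×ₗ Fin k ×ₗ Fin r) rfl).symm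
  have hφ : StrictMono fun v => (φ v : ℕ) := φ.strictMono
  have hx := (isEdgeFamily_stackedEdge (k := k) hp hq hs).map hφ
  refine ⟨_, hpq.isClique_image hx fun a b hab =>
    (samePattern_stackedEdge hp hq hs hab hpq.ne).map hφ, ?_⟩
  rw [card_image_of_injective, card_univ, Fintype.card_fin]
  refine fun a b hab => hx.injective ⟨0, hr⟩ ?_
  exact congrFun (eq_of_image_eq (hx.strictMono a) (hx.strictMono b) hab) _

end Cliques

section Composition

variable {r : ℕ}

/-- The levels `a, …, b - 1` form a class of `s` (or `b ≤ a`). -/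
def IsBlock (s : Setoid (Fin r)) (a b : ℕ) : Prop :=
  ∀ l m : Fin r, a ≤ m → m < b → (s l m ↔ a ≤ l ∧ l < b)

/-- No class of `s` contains levels from both sides of the gap before level `n`. -/
def IsCut (s : Setoid (Fin r)) (n : ℕ) : Prop :=
  ∀ ⦃l m : Fin r⦄, s l m → l < n → m < n

lemma HasConvexClasses.isBlock_blockStart {s : Setoid (Fin r)} (hs : HasConvexClasses s)
    {e : Fin r} (he : IsCut s (e + 1)) : IsBlock s (blockStart s e).val (e + 1) := by
  have hclass : ∀ l, s l e ↔ blockStart s e ≤ l ∧ (l : ℕ) < e + 1 := by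
    refine fun l => ⟨fun h => ⟨blockStart_le_of_rel h, he (s.symm h) e.val.lt_succ_self⟩, ?_⟩
    rintro ⟨hl, hle⟩
    have hstart := blockStart_rel s e
    exact s.trans (s.symm (hs hl (Fin.le_def.2 (Nat.le_of_lt_succ hle)) hstart)) hstart
  intro l m hm hme
  have hm_e := (hclass m).2 ⟨hm, hme⟩
  exact ⟨fun h => (hclass l).1 (s.trans h hm_e), fun h =>
    s.trans ((hclass l).2 h) (s.symm hm_e)⟩

lemma IsCut.of_isBlock {s : Setoid (Fin r)} {a b : ℕ} (hb : IsCut s b) (hab : IsBlock s a b)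
    (hle : a ≤ b) : IsCut s a := by
  intro l m hlm hl
  by_contra! hm
  exact hl.not_ge ((hab l m hm (hb hlm (hl.trans_le hle))).1 hlm).1

lemma IsPatternPair.eq_of_isBlock {p q : Fin r → ℕ} (h : IsPatternPair p q) {s : Setoid (Fin r)}
    (hs : ∀ i j, s i j ↔ Separated p q i j) {a b : ℕ} (hab : IsBlock s a b) (hb : b ≤ r)
    {m : Fin r} (ham : a ≤ m) (hmb : m < b) (hm : p m < q m) :
    p m = m + 1 + a ∧ q m = m + 1 + b := by
  have hp := h.strictMono_left.monotone
  have hq := h.strictMono_right.monotone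
  have hs' : ∀ i j, s i j ↔ Separated q p i j := fun i j =>
    (hs i j).trans (separated_swap h.ne).symm
  have hbefore : ∀ l, blockStart s l < blockStart s m ↔ l < a := fun l => by
    rw [(hasConvexClasses_of_separated hp hq hs).blockStart_lt_iff, hab l m ham hmb]
    lia
  have hself : ∀ l, s l m → p l < q l := fun l hl =>
    (((hs l m).1 hl).self_lt_self_iff hp hq).2 hm
  have hqp : ∀ l, q l < p m ↔ l < a := fun l => by
    rw [lt_iff_blockStart_lt_or hq hp hs', hbefore]
    exact or_iff_left fun hl => (hself l hl.1).not_gt hl.2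
  have hpq : ∀ l, p l < q m ↔ l < b := fun l => by
    rw [lt_iff_blockStart_lt_or hp hq hs, hbefore, and_iff_left_of_imp (hself l),
      hab l m ham hmb]
    lia
  have hcard_q := h.left_eq m
  have hcard_p := h.symm.left_eq m
  simp only [hqp, Fin.card_filter_val_lt, min_eq_right (ham.trans (hmb.le.trans hb))] at hcard_q
  simp only [hpq, Fin.card_filter_val_lt, min_eq_right hb] at hcard_p
  exact ⟨hcard_q, hcard_p⟩

/-- The first `n` letters of the word of the pattern `{p, q}`, `true` standing for the edge
enumerated by `p`. -/
noncomputable def prefixWord (p : Fin r → ℕ) (n : ℕ) : List Bool :=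
  (List.range n).map fun j => decide (j + 1 ∈ Set.range p)

lemma prefixWord_add {p : Fin r → ℕ} {n t : ℕ} {c : Bool}
    (hc : ∀ u < t, decide (n + u + 1 ∈ Set.range p) = c) :
    prefixWord p (n + t) = prefixWord p n ++ List.replicate t c := by
  rw [prefixWord, List.range_add, List.map_append, List.map_map, prefixWord,
    List.append_cancel_left_eq]
  have := (List.map_eq_replicate_iff (l := List.range t)
    (f := fun u => decide (n + u + 1 ∈ Set.range p)) (b := c)).2 fun u hu =>
      hc u (List.mem_range.1 hu)
  rwa [List.length_range] at this

lemma IsPatternPair.exists_letters_of_isBlock {p q : Fin r → ℕ} (h : IsPatternPair p q)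
    {s : Setoid (Fin r)} (hs : ∀ i j, s i j ↔ Separated p q i j) {a t : ℕ}
    (hblock : IsBlock s a (a + t)) (ht : a + t ≤ r) :
    ∃ c : Bool, ∀ u < t, decide (2 * a + u + 1 ∈ Set.range p) = c ∧
      decide (2 * a + t + u + 1 ∈ Set.range p) = !c := by
  have hs' : ∀ i j, s i j ↔ Separated q p i j := fun i j =>
    (hs i j).trans (separated_swap h.ne).symm
  let c : Bool := decide (∀ m : Fin r, a ≤ m → m < a + t → p m < q m)
  have hc : ∀ m : Fin r, a ≤ m → m < a + t → (p m < q m ↔ c = true) := by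
    refine fun m ham hmb => ⟨fun hm => decide_eq_true fun l hal hlb => ?_, fun hc =>
      of_decide_eq_true hc m ham hmb⟩
    have hlm := (hs l m).1 ((hblock l m ham hmb).2 ⟨hal, hlb⟩)
    exact (hlm.self_lt_self_iff h.strictMono_left.monotone h.strictMono_right.monotone).2 hm
  refine ⟨c, fun u hu => ?_⟩
  let m : Fin r := ⟨a + u, by lia⟩
  have ham : a ≤ m := Nat.le_add_right a u
  have hmb : m < a + t := Nat.add_lt_add_left hu a
  have hq_mem : q m ∉ Set.range p := fun ⟨l, hl⟩ => h.ne l m hl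
  rcases lt_or_gt_of_ne (h.ne m m) with hm | hm
  · obtain ⟨hp_eq, hq_eq⟩ := h.eq_of_isBlock hs hblock ht ham hmb hm
    rw [(hc m ham hmb).1 hm, show 2 * a + u + 1 = p m by lia,
      show 2 * a + t + u + 1 = q m by lia]
    exact ⟨decide_eq_true (Set.mem_range_self m), decide_eq_false hq_mem⟩
  · obtain ⟨hq_eq, hp_eq⟩ := h.symm.eq_of_isBlock hs' hblock ht ham hmb hm
    rw [Bool.eq_false_iff.2 ((hc m ham hmb).not.1 hm.not_gt), show 2 * a + u + 1 = q m by lia,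
      show 2 * a + t + u + 1 = p m by lia]
    exact ⟨decide_eq_false hq_mem, decide_eq_true (Set.mem_range_self m)⟩

lemma IsPatternPair.prefixWord_of_isBlock {p q : Fin r → ℕ} (h : IsPatternPair p q)
    {s : Setoid (Fin r)} (hs : ∀ i j, s i j ↔ Separated p q i j) {a t : ℕ}
    (hblock : IsBlock s a (a + t)) (ht : a + t ≤ r) :
    ∃ c, prefixWord p (2 * (a + t)) =
      prefixWord p (2 * a) ++ (List.replicate t c ++ List.replicate t !c) := by
  obtain ⟨c, hc⟩ := h.exists_letters_of_isBlock hs hblock ht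
  refine ⟨c, ?_⟩
  rw [show 2 * (a + t) = 2 * a + t + t by ring, prefixWord_add fun u hu => (hc u hu).2,
    prefixWord_add fun u hu => (hc u hu).1, List.append_assoc]

lemma IsBlockSplitting.append {w : List Bool} {lam : List ℕ} (h : IsBlockSplitting w lam) {t : ℕ}
    (ht : 1 ≤ t) (c : Bool) :
    IsBlockSplitting (w ++ (List.replicate t c ++ List.replicate t !c)) (lam ++ [t]) := by
  obtain ⟨hlam, bs, hlen, rfl⟩ := h
  refine ⟨?_, bs ++ [c], ?_, ?_⟩
  · simpa only [List.forall_mem_append, List.forall_mem_singleton] using ⟨hlam, ht⟩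
  · simp only [List.length_append, hlen, List.length_singleton]
  · simp only [List.zipWith_append hlen.symm, List.zipWith_cons_cons, List.zipWith_nil_left,
      List.flatten_append, List.flatten_cons, List.flatten_nil, List.append_nil]

lemma HasConvexClasses.exists_isBlockSplitting {s : Setoid (Fin r)} (hs : HasConvexClasses s)
    {n : ℕ} (hn : n ≤ r) (hcut : IsCut s n) :
    ∃ lam, ∀ p q : Fin r → ℕ, IsPatternPair p q → (∀ i j, s i j ↔ Separated p q i j) →
      IsBlockSplitting (prefixWord p (2 * n)) lam := by
  induction n using Nat.strong_induction_on with
  | _ n ih =>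
    rcases n with _ | e
    · exact ⟨[], fun p q _ _ => ⟨List.forall_mem_nil _, [], rfl, rfl⟩⟩
    · have hblock := hs.isBlock_blockStart (e := ⟨e, hn⟩) hcut
      set a := (blockStart s ⟨e, hn⟩).val
      have hae : a < e + 1 := Nat.lt_succ_of_le (blockStart_le s ⟨e, hn⟩)
      obtain ⟨t, ht⟩ := Nat.exists_eq_add_of_le hae.le
      obtain ⟨lam, hlam⟩ := ih a hae (hae.le.trans hn) (hcut.of_isBlock hblock hae.le)
      refine ⟨lam ++ [t], fun p q hpq hsep => ?_⟩
      simp only [ht] at hblock hn ⊢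
      obtain ⟨c, hc⟩ := hpq.prefixWord_of_isBlock hsep hblock hn
      exact hc ▸ (hlam p q hpq hsep).append (by lia) c

lemma patternWord_eq_prefixWord {p q : Fin r → ℕ} (hpq : IsPatternPair p q)
    (h1 : 1 ∈ univ.image p) :
    patternWord r {univ.image p, univ.image q} = prefixWord p (2 * r) := by
  have h1' : 1 ∉ univ.image q := by
    simp only [mem_image, mem_univ, true_and, not_exists] at h1 ⊢
    obtain ⟨i, hi⟩ := h1
    exact fun j hj => hpq.ne i j (hi.trans hj.symm)
  refine List.map_congr_left fun j _ => decide_eq_decide.2 ?_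
  simp only [mem_insert, mem_singleton, exists_eq_or_imp, exists_eq_left, h1, h1', true_and,
    false_and, or_false, mem_image, mem_univ, Set.mem_range]

end Composition

section Mismatches

variable {r : ℕ}

lemma IsOrderedMatching.exists_isPatternPair (hr : 0 < r) {P : Finset (Finset ℕ)}
    (hP : IsOrderedMatching r 2 P) : ∃ p q : Fin r → ℕ,
      IsPatternPair p q ∧ 1 ∈ univ.image p ∧ P = {univ.image p, univ.image q} := by
  obtain ⟨hcard, hedge, hdisj, hunion⟩ := hP
  obtain ⟨e, f, hef, rfl⟩ := card_eq_two.1 hcard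
  rw [biUnion_insert, singleton_biUnion, id, id, mul_comm] at hunion
  wlog h1 : 1 ∈ e generalizing e f
  · have h1f : 1 ∈ f := (mem_union.1 (hunion ▸ mem_Icc.2 ⟨le_rfl, by lia⟩)).resolve_left h1
    rw [pair_comm] at hcard hedge hdisj ⊢
    exact this f e hef.symm hcard hedge hdisj (union_comm f e ▸ hunion) h1f
  have he := hedge e (mem_insert_self _ _)
  have hf := hedge f (mem_insert_of_mem (mem_singleton_self _))
  have hdisj_ef := hdisj e (mem_insert_self _ _) f (mem_insert_of_mem (mem_singleton_self _)) hef
  have he_image := image_orderEmbOfFin_univ e he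
  have hf_image := image_orderEmbOfFin_univ f hf
  refine ⟨e.orderEmbOfFin he, f.orderEmbOfFin hf, ⟨(e.orderEmbOfFin he).strictMono,
    (f.orderEmbOfFin hf).strictMono, fun i j => ?_, ?_⟩, ?_, ?_⟩
  · exact disjoint_iff_ne.1 hdisj_ef _ (orderEmbOfFin_mem _ _ i) _ (orderEmbOfFin_mem _ _ j)
  · rw [he_image, hf_image, hunion]
  · rwa [he_image]
  · rw [he_image, hf_image]

lemma Mismatch.exists_not_separated_iff (hr : 0 < r) {p q p' q' : Fin r → ℕ}
    (hpq : IsPatternPair p q) (hpq' : IsPatternPair p' q') (h1 : 1 ∈ univ.image p)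
    (h1' : 1 ∈ univ.image p')
    (h : Mismatch r {univ.image p, univ.image q} {univ.image p', univ.image q'}) :
    ∃ i j, i < j ∧ ¬ (Separated p q i j ↔ Separated p' q' i j) := by
  by_contra! hlt
  have heq : Separated p q = Separated p' q' := by
    funext i j
    rcases lt_trichotomy i j with hij | rfl | hji
    · exact propext (hlt i j hij)
    · exact propext (iff_of_true Iff.rfl Iff.rfl)
    · exact propext (Iff.comm.trans ((hlt j i hji).trans Iff.comm))
  have hcollectable : Collectable r {univ.image p, univ.image q} ↔
      Collectable r {univ.image p', univ.image q'} := by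
    rw [collectable_iff_isTrans_separated hpq hr, collectable_iff_isTrans_separated hpq' hr, heq]
  obtain ⟨-, h | h | ⟨hcoll, -, hcomp⟩⟩ := h
  · exact h.2 (hcollectable.1 h.1)
  · exact h.1 (hcollectable.2 h.2)
  · have := hcoll.isTrans_separated hpq
    have hconvex := hasConvexClasses_of_separated (s := separationSetoid p q)
      hpq.strictMono_left.monotone hpq.strictMono_right.monotone fun _ _ => Iff.rfl
    obtain ⟨lam, hlam⟩ := hconvex.exists_isBlockSplitting le_rfl fun _ m _ _ => m.2
    refine hcomp ⟨lam, ?_, ?_⟩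
    · rw [HasComposition, patternWord_eq_prefixWord hpq h1]
      exact hlam p q hpq fun _ _ => Iff.rfl
    · rw [HasComposition, patternWord_eq_prefixWord hpq' h1']
      exact hlam p' q' hpq' fun i j => iff_of_eq (congrFun₂ heq i j)

end Mismatches

section Traces

variable {r k : ℕ} {M : Finset (Finset ℕ)}

lemma IsOrderedMatching.enumeration_mem_Icc (hM : IsOrderedMatching r k M) (e : M) (i : Fin r) :
    enumeration hM.2.1 e i ∈ Icc 1 (r * k) :=
  hM.2.2.2.subset (mem_biUnion.2 ⟨e, e.2, orderEmbOfFin_mem _ _ i⟩)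

lemma IsOrderedMatching.trace_getElem? (hM : IsOrderedMatching r k M) (e : M) (i : Fin r) :
    (trace r k M)[enumeration hM.2.1 e i - 1]? = some (i.val + 1) := by
  have ⟨_, hcard, hdisj, hunion⟩ := hM
  set v := enumeration hM.2.1 e i
  have hv_mem : v ∈ (e : Finset ℕ) := orderEmbOfFin_mem _ _ i
  obtain ⟨hv_pos, hv_le⟩ := mem_Icc.1 (hM.enumeration_mem_Icc e i)
  have hfilter : {n ∈ Icc 1 (r * k) | n ≤ v ∧ ∃ f ∈ M, v ∈ f ∧ n ∈ f} =
      {n ∈ univ.image (enumeration hM.2.1 e) | n ≤ v} := by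
    ext n
    rw [image_enumeration, mem_filter, mem_filter]
    refine ⟨fun ⟨_, hnv, f, hf, hvf, hnf⟩ => ⟨?_, hnv⟩, fun ⟨hne, hnv⟩ =>
      ⟨hunion ▸ mem_biUnion.2 ⟨e, e.2, hne⟩, hnv, e, e.2, hv_mem, hne⟩⟩
    by_contra hne
    exact disjoint_left.1 (hdisj e e.2 f hf (by rintro rfl; exact hne hnf)) hv_mem hvf
  have hrank := card_image_filter_le (orderEmbOfFin (e : Finset ℕ) (hcard e e.2)).strictMono i
  rw [trace, List.getElem?_map, List.getElem?_range (by lia), Option.map_some,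
    Nat.sub_add_cancel hv_pos, hfilter]
  exact congrArg some hrank

lemma IsOrderedMatching.range_enumeration_level (hM : IsOrderedMatching r k M) (i : Fin r) :
    Set.range (fun e => enumeration hM.2.1 e i) =
      {v | 1 ≤ v ∧ (trace r k M)[v - 1]? = some (i.val + 1)} := by
  refine Set.Subset.antisymm ?_ fun v ⟨hv, hi⟩ => ?_
  · rintro _ ⟨e, rfl⟩
    exact ⟨(mem_Icc.1 (hM.enumeration_mem_Icc e i)).1, hM.trace_getElem? e i⟩
  · obtain ⟨hlt, -⟩ := List.getElem?_eq_some_iff.1 hi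
    have hv_mem : v ∈ M.biUnion id := by
      rw [hM.2.2.2, mem_Icc]
      rw [trace, List.length_map, List.length_range] at hlt
      lia
    obtain ⟨e, he, hve⟩ := mem_biUnion.1 hv_mem
    obtain ⟨j, -, rfl⟩ := mem_image.1 ((image_enumeration hM.2.1 ⟨e, he⟩).superset hve)
    have hij : (j : ℕ) = i := by
      simpa only [hM.trace_getElem?, Option.some_inj, Nat.add_right_cancel_iff] using hi
    exact ⟨⟨e, he⟩, by rw [Fin.ext hij]⟩

end Traces

/-- **Lemma.** For a mismatched pair `{P, Q}` of distinct `r`-patterns, distinct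
`{P,Q}`-cliques of the same size `k` partitioning `[rk]` have distinct traces. -/
theorem mismatch_reconstructible (r : ℕ) (hr : 2 ≤ r) (P Q : Finset (Finset ℕ))
    (hP : IsOrderedMatching r 2 P) (hQ : IsOrderedMatching r 2 Q)
    (hmis : Mismatch r P Q) (k : ℕ) (M N : Finset (Finset ℕ))
    (hM : IsOrderedMatching r k M) (hN : IsOrderedMatching r k N)
    (hMc : IsClique r {P, Q} M) (hNc : IsClique r {P, Q} N) (hMN : M ≠ N) :
    trace r k M ≠ trace r k N := by
  intro htrace
  have hr_pos : 0 < r := by lia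
  obtain ⟨p, q, hpq, h1, rfl⟩ := hP.exists_isPatternPair hr_pos
  obtain ⟨p', q', hpq', h1', rfl⟩ := hQ.exists_isPatternPair hr_pos
  obtain ⟨i, j, hij, hsep⟩ := hmis.exists_not_separated_iff hr_pos hpq hpq' h1 h1'
  have hlevels : ∀ m, Set.range (fun e => enumeration hM.2.1 e m) =
      Set.range fun e => enumeration hN.2.1 e m := fun m => by
    rw [hM.range_enumeration_level, hN.range_enumeration_level, htrace]
  exact hMN <| eq_of_range_enumeration_eq hM.2.1 hN.2.1 <| range_eq_of_not_separated_iff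
    (isEdgeFamily_enumeration hM.2.1 hM.2.2.1) (isEdgeFamily_enumeration hN.2.1 hN.2.2.1)
    (hMc.hasPatterns_enumeration hpq hpq') (hNc.hasPatterns_enumeration hpq hpq')
    hpq.ne hpq'.ne hij hsep hlevels
end

section
/- Given integers r ≥ 2, t ≥ 2r, and n ≥ t, let W₁, ..., W_r be disjoint subsets of [rn] with |W_i| = t for each 1 ≤ i ≤ r. Then the probability that no edge of RM_n^(r) spans all of W₁, ..., W_r is at most exp(−(1/(2r)^r)·(t^r / n^(r−1))). -/
open Finset
open scoped Classical

/-!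
Expose the random matching edge by edge, always revealing the edge through an unmatched vertex of
one fixed `W i₀`. Each round removes at most `r` vertices from every `W i`, so for about
`t / (2 * r)` rounds every `W i` keeps at least `t / 2` unmatched vertices. In such a round there
are at most `(r * n) ^ (r - 1)` possible edges, all equally likely, and at least
`(t / 2) ^ (r - 1)` of them span the sets: choose one vertex from each `W i` with `i ≠ i₀`. Hence
the round misses with probability at most `1 - p ≤ exp (-p)`, where
`p = (t / (2 * r * n)) ^ (r - 1)`, and multiplying over the rounds gives the bound.
-/

section PerfectMatchings

variable {α : Type*} [DecidableEq α] {H K : Set (Finset α)} {V : Finset α}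
  {M : Finset (Finset α)} {e : Finset α} {w : α}

/-- The perfect matchings on the vertex set `V` of the hypergraph with edge set `H`: the families
of pairwise disjoint edges that cover `V` exactly. -/
noncomputable def perfectMatchings (H : Set (Finset α)) (V : Finset α) :
    Finset (Finset (Finset α)) :=
  {M ∈ V.powerset.powerset |
    (M : Set (Finset α)) ⊆ H ∧ (M : Set (Finset α)).PairwiseDisjoint id ∧ M.biUnion id = V}

/-- The edges of the hypergraph `H` that lie in `V` and contain the vertex `w`. -/
noncomputable def edgesThrough (H : Set (Finset α)) (V : Finset α) (w : α) : Finset (Finset α) :=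
  {e ∈ V.powerset | e ∈ H ∧ w ∈ e}

lemma mem_perfectMatchings :
    M ∈ perfectMatchings H V ↔
      (M : Set (Finset α)) ⊆ H ∧ (M : Set (Finset α)).PairwiseDisjoint id ∧ M.biUnion id = V := by
  refine ⟨fun h => (mem_filter.1 h).2, fun h => mem_filter.2 ⟨mem_powerset.2 fun e he => ?_, h⟩⟩
  exact mem_powerset.2 (h.2.2 ▸ subset_biUnion_of_mem id he)

lemma mem_edgesThrough : e ∈ edgesThrough H V w ↔ e ⊆ V ∧ e ∈ H ∧ w ∈ e := by
  rw [edgesThrough, mem_filter, mem_powerset]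

lemma subset_of_mem_perfectMatchings (hM : M ∈ perfectMatchings H V) (he : e ∈ M) : e ⊆ V :=
  (mem_perfectMatchings.1 hM).2.2 ▸ subset_biUnion_of_mem id he

lemma perfectMatchings_mono (h : H ⊆ K) (V : Finset α) :
    perfectMatchings H V ⊆ perfectMatchings K V := fun _ hM =>
  mem_perfectMatchings.2 ((mem_perfectMatchings.1 hM).imp_left fun hH => hH.trans h)

lemma insert_mem_perfectMatchings_iff (he : e ∉ M) :
    insert e M ∈ perfectMatchings H V ↔ (e ∈ H ∧ e ⊆ V) ∧ M ∈ perfectMatchings H (V \ e) := by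
  simp only [mem_perfectMatchings, coe_insert, Set.insert_subset_iff, biUnion_insert, id,
    Set.pairwiseDisjoint_insert_of_notMem (mt mem_coe.1 he)]
  constructor
  · rintro ⟨⟨heH, hMH⟩, ⟨hM, hdisj⟩, rfl⟩
    refine ⟨⟨heH, subset_union_left⟩, hMH, hM, ?_⟩
    rw [union_sdiff_cancel_left ((disjoint_biUnion_right e M id).2 hdisj)]
  · rintro ⟨⟨heH, heV⟩, hMH, hM, hcover⟩
    refine ⟨⟨heH, hMH⟩, ⟨hM, fun f hf => ?_⟩, by rw [hcover, union_sdiff_of_subset heV]⟩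
    exact disjoint_sdiff.mono_right (hcover ▸ subset_biUnion_of_mem id hf)

lemma card_filter_mem_perfectMatchings (he : e ∈ edgesThrough H V w) :
    #{M ∈ perfectMatchings H V | e ∈ M} = #(perfectMatchings H (V \ e)) := by
  obtain ⟨heV, heH, hwe⟩ := mem_edgesThrough.1 he
  have notMem {M} (hM : M ∈ perfectMatchings H (V \ e)) : e ∉ M := fun h =>
    (mem_sdiff.1 (subset_of_mem_perfectMatchings hM h hwe)).2 hwe
  refine card_nbij' (fun M => M.erase e) (insert e) (fun M hM => ?_) (fun M hM => ?_)
    (fun M hM => insert_erase (mem_filter.1 hM).2) (fun M hM => erase_insert (notMem hM))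
  · obtain ⟨hM, heM⟩ := mem_filter.1 hM
    rw [← insert_erase heM] at hM
    exact ((insert_mem_perfectMatchings_iff (notMem_erase e M)).1 hM).2
  · exact mem_filter.2 ⟨(insert_mem_perfectMatchings_iff (notMem hM)).2 ⟨⟨heH, heV⟩, hM⟩,
      mem_insert_self e M⟩

theorem card_perfectMatchings_eq_sum (H : Set (Finset α)) (hw : w ∈ V) :
    #(perfectMatchings H V) = ∑ e ∈ edgesThrough H V w, #(perfectMatchings H (V \ e)) := by
  have partition_by_edge : perfectMatchings H V =
      (edgesThrough H V w).biUnion fun e => {M ∈ perfectMatchings H V | e ∈ M} := by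
    ext M
    simp only [mem_biUnion, mem_filter]
    refine ⟨fun hM => ?_, fun ⟨_, _, hM, _⟩ => hM⟩
    obtain ⟨hMH, -, hcover⟩ := mem_perfectMatchings.1 hM
    obtain ⟨e, he, hwe⟩ := mem_biUnion.1 (hcover.symm ▸ hw)
    exact ⟨e, mem_edgesThrough.2 ⟨subset_of_mem_perfectMatchings hM he, hMH he, hwe⟩, hM, he⟩
  rw [partition_by_edge, card_biUnion, sum_congr rfl fun e => card_filter_mem_perfectMatchings]
  refine fun e he f hf hef => disjoint_left.2 fun M heM hfM => ?_
  obtain ⟨hM, heM⟩ := mem_filter.1 heM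
  exact disjoint_left.1
    ((mem_perfectMatchings.1 hM).2.1 heM (mem_filter.1 hfM).2 hef)
    (mem_edgesThrough.1 he).2.2 (mem_edgesThrough.1 hf).2.2

lemma edgesThrough_diff (H K : Set (Finset α)) (V : Finset α) (w : α) :
    edgesThrough (H \ K) V w = edgesThrough H V w \ edgesThrough (H ∩ K) V w := by
  ext e
  simp only [mem_sdiff, mem_edgesThrough, Set.mem_sdiff, Set.mem_inter_iff]
  tauto

lemma edgesThrough_mono (h : H ⊆ K) (V : Finset α) (w : α) :
    edgesThrough H V w ⊆ edgesThrough K V w := fun _ he =>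
  mem_edgesThrough.2 ((mem_edgesThrough.1 he).imp_right (And.imp_left fun hH => h hH))

end PerfectMatchings

section UniformEdges

variable {α : Type*} [DecidableEq α] {r m : ℕ} {V e : Finset α} {M : Finset (Finset α)} {w : α}

/-- The complete `r`-uniform hypergraph: all sets of `r` vertices. -/
def uniformEdges (α : Type*) (r : ℕ) : Set (Finset α) := {e | #e = r}

lemma card_edgesThrough_uniformEdges (hr : 0 < r) (hw : w ∈ V) :
    #(edgesThrough (uniformEdges α r) V w) = (#V - 1).choose (r - 1) := by
  have : edgesThrough (uniformEdges α r) V w = (V.powersetCard r).filter ({w} ⊆ ·) := by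
    ext e
    simp only [mem_edgesThrough, mem_filter, mem_powersetCard, singleton_subset_iff, and_assoc,
      uniformEdges, Set.mem_ofPred_eq]
  rw [this, card_filter_powersetCard_subset _ _ _ (singleton_subset_iff.2 hw) hr, card_singleton]

lemma card_sdiff_of_mem_edgesThrough {H : Set (Finset α)} (hH : H ⊆ uniformEdges α r)
    (he : e ∈ edgesThrough H V w) (hV : #V = (m + 1) * r) : #(V \ e) = m * r := by
  obtain ⟨heV, heH, -⟩ := mem_edgesThrough.1 he
  have hcard : #e = r := hH heH
  rw [card_sdiff_of_subset heV, hV, hcard, Nat.succ_mul, Nat.add_sub_cancel]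

lemma card_eq_mul_of_mem_perfectMatchings (hM : M ∈ perfectMatchings (uniformEdges α r) V) :
    #V = #M * r := by
  obtain ⟨hMH, hdisj, rfl⟩ := mem_perfectMatchings.1 hM
  exact (card_biUnion hdisj).trans (sum_const_nat fun e he => hMH he)

lemma perfectMatchings_uniformEdges_empty (hr : 0 < r) :
    perfectMatchings (uniformEdges α r) ∅ = {∅} := by
  ext M
  rw [mem_singleton]
  constructor
  · intro hM
    have hcard := card_eq_mul_of_mem_perfectMatchings hM
    simpa [hr.ne'] using hcard
  · rintro rfl
    simp [mem_perfectMatchings]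

theorem card_perfectMatchings_uniformEdges (hr : 0 < r) (hV : #V = m * r) :
    #(perfectMatchings (uniformEdges α r) V) = m.uniformBell r := by
  induction m generalizing V with
  | zero =>
    obtain rfl : V = ∅ := by simpa using hV
    rw [perfectMatchings_uniformEdges_empty hr, card_singleton, Nat.uniformBell_zero_left]
  | succ m ih =>
    obtain ⟨w, hw⟩ : V.Nonempty := card_pos.1 (by rw [hV]; positivity)
    rw [card_perfectMatchings_eq_sum _ hw,
      sum_const_nat fun e he => ih (card_sdiff_of_mem_edgesThrough subset_rfl he hV),
      card_edgesThrough_uniformEdges hr hw, hV, Nat.succ_mul, Nat.uniformBell_succ_left]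

end UniformEdges

section SpanningEdges

variable {α ι : Type*} [DecidableEq α] {W : ι → Finset α} {V : Finset α} {w : α}

/-- The sets that span the family `W`, i.e. meet each of its members in exactly one vertex. -/
def spanningEdges (W : ι → Finset α) : Set (Finset α) := {e | ∀ i, #(e ∩ W i) = 1}

variable [Fintype ι]

lemma image_univ_inter_eq_singleton (hW : Pairwise (Function.onFun Disjoint W)) {f : ι → α}
    (hf : ∀ i, f i ∈ W i) (i : ι) : univ.image f ∩ W i = {f i} := by
  ext x
  simp only [mem_inter, mem_image, mem_univ, true_and, mem_singleton]
  constructor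
  · rintro ⟨⟨j, rfl⟩, hx⟩
    by_contra hne
    exact disjoint_left.1 (hW fun hji : j = i => hne (hji ▸ rfl)) (hf j) hx
  · rintro rfl
    exact ⟨⟨i, rfl⟩, hf i⟩

lemma image_univ_mem_edgesThrough (hW : Pairwise (Function.onFun Disjoint W)) {f : ι → α}
    (hf : ∀ i, f i ∈ W i ∩ V) (i : ι) :
    univ.image f ∈
      edgesThrough (uniformEdges α (Fintype.card ι) ∩ spanningEdges W) V (f i) := by
  have hfW i : f i ∈ W i := (mem_inter.1 (hf i)).1
  have hinj : Function.Injective f := fun i j hij => by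
    by_contra hne
    exact disjoint_left.1 (hW hne) (hfW i) (hij ▸ hfW j)
  refine mem_edgesThrough.2 ⟨?_, ⟨?_, fun j => ?_⟩, mem_image_of_mem f (mem_univ i)⟩
  · exact image_subset_iff.2 fun j _ => (mem_inter.1 (hf j)).2
  · exact card_image_of_injective univ hinj
  · rw [image_univ_inter_eq_singleton hW hfW, card_singleton]

lemma prod_card_inter_le_card_edgesThrough (hW : Pairwise (Function.onFun Disjoint W)) {i₀ : ι}
    (hw : w ∈ W i₀ ∩ V) :
    ∏ i ∈ univ.erase i₀, #(W i ∩ V) ≤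
      #(edgesThrough (uniformEdges α (Fintype.card ι) ∩ spanningEdges W) V w) := by
  set U : ι → Finset α := Function.update (fun i => W i ∩ V) i₀ {w}
  have hU {f} (hf : f ∈ Fintype.piFinset U) : f i₀ = w ∧ ∀ i, f i ∈ W i ∩ V := by
    have hf₀ : f i₀ = w := by simpa [U] using Fintype.mem_piFinset.1 hf i₀
    refine ⟨hf₀, fun i => ?_⟩
    obtain rfl | hi := eq_or_ne i i₀
    · rwa [hf₀]
    · simpa only [U, Function.update_of_ne hi] using Fintype.mem_piFinset.1 hf i
  have card_piFinset : #(Fintype.piFinset U) = ∏ i ∈ univ.erase i₀, #(W i ∩ V) := by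
    rw [Fintype.card_piFinset, ← mul_prod_erase univ _ (mem_univ i₀)]
    simp only [U, Function.update_self, card_singleton, one_mul]
    exact prod_congr rfl fun i hi => by rw [Function.update_of_ne (ne_of_mem_erase hi)]
  rw [← card_piFinset]
  refine card_le_card_of_injOn (fun f => univ.image f) (fun f hf => ?_) fun f hf g hg hfg => ?_
  · obtain ⟨rfl, hfW⟩ := hU hf
    exact image_univ_mem_edgesThrough hW hfW i₀
  · funext i
    have inter_eq {f} (hf : f ∈ Fintype.piFinset U) : univ.image f ∩ W i = {f i} :=
      image_univ_inter_eq_singleton hW (fun j => (mem_inter.1 ((hU hf).2 j)).1) i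
    exact singleton_injective ((inter_eq hf).symm.trans
      ((congrArg (· ∩ W i) hfg).trans (inter_eq hg)))

lemma pow_le_card_edgesThrough (hW : Pairwise (Function.onFun Disjoint W)) {i₀ : ι}
    (hw : w ∈ W i₀ ∩ V) {s : ℕ} (hs : ∀ i, s ≤ #(W i ∩ V)) :
    s ^ (Fintype.card ι - 1) ≤
      #(edgesThrough (uniformEdges α (Fintype.card ι) ∩ spanningEdges W) V w) :=
  calc s ^ (Fintype.card ι - 1) = s ^ #(univ.erase i₀) := by
        rw [card_erase_of_mem (mem_univ i₀), card_univ]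
    _ ≤ ∏ i ∈ univ.erase i₀, #(W i ∩ V) := pow_card_le_prod _ _ _ fun i _ => hs i
    _ ≤ _ := prod_card_inter_le_card_edgesThrough hW hw

lemma card_edgesThrough_diff_spanningEdges_le (hW : Pairwise (Function.onFun Disjoint W)) {i₀ : ι}
    (hw : w ∈ W i₀ ∩ V) {s N : ℕ} (hs : ∀ i, s ≤ #(W i ∩ V)) (hN : #V ≤ N) :
    (#(edgesThrough (uniformEdges α (Fintype.card ι) \ spanningEdges W) V w) : ℝ) ≤
      Real.exp (-((s : ℝ) / N) ^ (Fintype.card ι - 1)) *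
        #(edgesThrough (uniformEdges α (Fintype.card ι)) V w) := by
  set r := Fintype.card ι
  set E := edgesThrough (uniformEdges α r) V w
  set S := edgesThrough (uniformEdges α r ∩ spanningEdges W) V w
  have hwV : w ∈ V := (mem_inter.1 hw).2
  have hNpos : 0 < N := (card_pos.2 ⟨w, hwV⟩).trans_le hN
  have card_E_le : (#E : ℝ) ≤ (N : ℝ) ^ (r - 1) := by
    rw [card_edgesThrough_uniformEdges (Fintype.card_pos_iff.2 ⟨i₀⟩) hwV]
    exact_mod_cast (Nat.choose_le_pow _ _).trans
      (Nat.pow_le_pow_left ((Nat.sub_le _ _).trans hN) _)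
  have le_card_S : ((s : ℝ) / N) ^ (r - 1) * #E ≤ #S :=
    calc ((s : ℝ) / N) ^ (r - 1) * #E ≤ ((s : ℝ) / N) ^ (r - 1) * (N : ℝ) ^ (r - 1) := by gcongr
      _ = (s : ℝ) ^ (r - 1) := by rw [← mul_pow, div_mul_cancel₀ _ (by positivity)]
      _ ≤ #S := mod_cast pow_le_card_edgesThrough hW hw hs
  calc (#(edgesThrough (uniformEdges α r \ spanningEdges W) V w) : ℝ) = #E - #S := by
        rw [edgesThrough_diff, cast_card_sdiff (edgesThrough_mono Set.inter_subset_left V w)]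
    _ ≤ (-((s : ℝ) / N) ^ (r - 1) + 1) * #E := by linarith
    _ ≤ _ := by gcongr; exact Real.add_one_le_exp _

theorem card_perfectMatchings_diff_spanningEdges_le [Nonempty ι]
    (hW : Pairwise (Function.onFun Disjoint W)) {s N m k : ℕ} (hs : 0 < s)
    (hV : #V = m * Fintype.card ι) (hN : #V ≤ N)
    (hWV : ∀ i, s + k * Fintype.card ι ≤ #(W i ∩ V) + Fintype.card ι) :
    (#(perfectMatchings (uniformEdges α (Fintype.card ι) \ spanningEdges W) V) : ℝ) ≤
      Real.exp (-((s : ℝ) / N) ^ (Fintype.card ι - 1)) ^ k *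
        m.uniformBell (Fintype.card ι) := by
  have hr : 0 < Fintype.card ι := Fintype.card_pos
  set r := Fintype.card ι
  set q := Real.exp (-((s : ℝ) / N) ^ (r - 1))
  set H := uniformEdges α r \ spanningEdges W
  have hH : H ⊆ uniformEdges α r := Set.sdiff_subset
  induction k generalizing m V with
  | zero =>
    rw [pow_zero, one_mul, ← card_perfectMatchings_uniformEdges hr hV]
    exact_mod_cast card_le_card (perfectMatchings_mono hH V)
  | succ k ih =>
    have hs_le i : s ≤ #(W i ∩ V) := by linarith [hWV i, Nat.zero_le (k * r)]
    let i₀ : ι := Classical.arbitrary ι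
    obtain ⟨w, hw⟩ : (W i₀ ∩ V).Nonempty := card_pos.1 (hs.trans_le (hs_le i₀))
    have hwV : w ∈ V := (mem_inter.1 hw).2
    obtain _ | m := m
    · exact absurd hV (by simpa using ne_empty_of_mem hwV)
    have recursive_bound : ∀ e ∈ edgesThrough H V w,
        (#(perfectMatchings H (V \ e)) : ℝ) ≤ q ^ k * m.uniformBell r := fun e he => by
      refine ih ((card_le_card sdiff_subset).trans hN)
        (card_sdiff_of_mem_edgesThrough hH he hV) fun i => ?_
      have hloss := card_le_card_sdiff_add_card (s := W i ∩ V) (t := e)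
      rw [inter_sdiff_assoc, show #e = r from hH (mem_edgesThrough.1 he).2.1] at hloss
      linarith [hWV i]
    calc (#(perfectMatchings H V) : ℝ)
        = ∑ e ∈ edgesThrough H V w, (#(perfectMatchings H (V \ e)) : ℝ) := by
          rw [card_perfectMatchings_eq_sum H hwV, Nat.cast_sum]
      _ ≤ #(edgesThrough H V w) * (q ^ k * m.uniformBell r) := by
          simpa only [nsmul_eq_mul] using sum_le_card_nsmul _ _ _ recursive_bound
      _ ≤ q * #(edgesThrough (uniformEdges α r) V w) * (q ^ k * m.uniformBell r) := by
          gcongr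
          exact card_edgesThrough_diff_spanningEdges_le hW hw hs_le hN
      _ = q ^ (k + 1) * (m + 1).uniformBell r := by
          rw [card_edgesThrough_uniformEdges hr hwV, hV, Nat.succ_mul, Nat.uniformBell_succ_left]
          push_cast
          ring

end SpanningEdges

section OrderedMatchings

variable {r n t : ℕ}

lemma filter_matchingFamilies_forall_mem (hr : 0 < r) (n : ℕ) (H : Set (Finset ℕ)) :
    {M ∈ matchingFamilies r n | ∀ e ∈ M, e ∈ H} =
      perfectMatchings (uniformEdges ℕ r ∩ H) (Icc 1 (r * n)) := by
  ext M
  have card_eq (hM : M ∈ perfectMatchings (uniformEdges ℕ r) (Icc 1 (r * n))) : #M = n := by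
    have hcard := card_eq_mul_of_mem_perfectMatchings hM
    rw [Nat.card_Icc, Nat.add_sub_cancel, mul_comm] at hcard
    exact (Nat.eq_of_mul_eq_mul_right hr hcard).symm
  constructor
  · intro hM
    obtain ⟨hM, hMH⟩ := mem_filter.1 hM
    obtain ⟨-, hcard, hdisj, hcover⟩ := (mem_filter.1 hM).2
    exact mem_perfectMatchings.2 ⟨fun e he => ⟨hcard e he, hMH e he⟩,
      fun e he f hf => hdisj e he f hf, hcover⟩
  · intro hM
    have hMu := perfectMatchings_mono Set.inter_subset_left _ hM
    obtain ⟨hMH, hdisj, hcover⟩ := mem_perfectMatchings.1 hM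
    refine mem_filter.2 ⟨mem_filter.2 ⟨?_, card_eq hMu, fun e he => (hMH he).1,
      fun e he f hf => hdisj he hf, hcover⟩, fun e he => (hMH he).2⟩
    exact mem_powerset.2 fun e he => mem_powerset.2 (subset_of_mem_perfectMatchings hM he)

lemma card_matchingFamilies (hr : 0 < r) (n : ℕ) : #(matchingFamilies r n) = n.uniformBell r := by
  have h := filter_matchingFamilies_forall_mem hr n Set.univ
  simp only [Set.mem_univ, implies_true, filter_true, Set.inter_univ] at h
  rw [h, card_perfectMatchings_uniformEdges hr (by rw [Nat.card_Icc, Nat.add_sub_cancel, mul_comm])]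

lemma prob_not_exists_mem (hr : 0 < r) (n : ℕ) (S : Set (Finset ℕ)) :
    prob r n (fun M => ¬ ∃ e ∈ M, e ∈ S) =
      #(perfectMatchings (uniformEdges ℕ r \ S) (Icc 1 (r * n))) / n.uniformBell r := by
  rw [prob, card_matchingFamilies hr, Set.sdiff_eq, ← filter_matchingFamilies_forall_mem hr]
  simp only [not_exists, not_and, Set.mem_compl_iff]

lemma spanning_exponent_le {k s : ℕ} (hr : 0 < r) (hk : t ≤ 2 * r * k) (hs : t ≤ 2 * s) :
    1 / (2 * (r : ℝ)) ^ r * ((t : ℝ) ^ r / (n : ℝ) ^ (r - 1)) ≤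
      k * ((s : ℝ) / (r * n : ℕ)) ^ (r - 1) := by
  have hk' : (t : ℝ) / (2 * r) ≤ k := by
    rw [div_le_iff₀ (by positivity), mul_comm]
    exact_mod_cast hk
  have hs' : (t : ℝ) / 2 ≤ s := by
    rw [div_le_iff₀ two_pos, mul_comm]
    exact_mod_cast hs
  calc 1 / (2 * (r : ℝ)) ^ r * ((t : ℝ) ^ r / (n : ℝ) ^ (r - 1))
      = t / (2 * r) * ((t : ℝ) / 2 / (r * n : ℕ)) ^ (r - 1) := by
        obtain ⟨d, rfl⟩ := Nat.exists_eq_succ_of_ne_zero hr.ne'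
        simp only [Nat.succ_eq_add_one, Nat.add_sub_cancel, Nat.cast_mul, div_div, div_pow,
          mul_pow, pow_succ]
        ring
    _ ≤ k * ((s : ℝ) / (r * n : ℕ)) ^ (r - 1) := by gcongr

theorem spanning_edge_probability_general (hr : 0 < r) (ht : 0 < t) (W : Fin r → Finset ℕ)
    (hsub : ∀ i, W i ⊆ Icc 1 (r * n)) (hdisj : ∀ i j, i ≠ j → Disjoint (W i) (W j))
    (hcard : ∀ i, t ≤ #(W i)) :
    prob r n (fun M => ¬ ∃ e ∈ M, ∀ i, #(e ∩ W i) = 1)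
      ≤ Real.exp (-(1 / (2 * (r : ℝ)) ^ r * ((t : ℝ) ^ r / (n : ℝ) ^ (r - 1)))) := by
  have : Nonempty (Fin r) := ⟨⟨0, hr⟩⟩
  have hIcc : #(Icc 1 (r * n)) = r * n := by rw [Nat.card_Icc, Nat.add_sub_cancel]
  -- Before the last of `k` rounds every `W i` has lost at most `(k - 1) * r ≤ t / 2` vertices.
  let s := t - t / 2
  let k := t / (2 * r) + 1
  have hsk : s + k * r ≤ t + r := by
    have hloss : t / (2 * r) * r ≤ t / 2 :=
      Nat.div_div_eq_div_mul t 2 r ▸ Nat.div_mul_le_self (t / 2) r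
    grind
  have hk : t ≤ 2 * r * k := (Nat.lt_mul_div_succ t (by positivity)).le
  have hbound := card_perfectMatchings_diff_spanningEdges_le (V := Icc 1 (r * n)) (m := n) (k := k)
    (fun i j => hdisj i j) (s := s) (N := r * n) (by omega) (by simp [mul_comm]) hIcc.le fun i => by
      rw [inter_eq_left.2 (hsub i), Fintype.card_fin]
      linarith [hcard i]
  rw [Fintype.card_fin, ← Real.exp_nat_mul] at hbound
  refine (prob_not_exists_mem hr n (spanningEdges W)).trans_le ?_
  refine (div_le_of_le_mul₀ (Nat.cast_nonneg _) (Real.exp_nonneg _) hbound).trans ?_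
  rw [Real.exp_le_exp, mul_neg, neg_le_neg_iff]
  exact spanning_exponent_le hr hk (by omega)

end OrderedMatchings

/-- **Lemma.** For disjoint sets `W₁, …, W_r ⊆ [rn]` of size `t` each (`t ≥ 2r`, `n ≥ t`),
the probability that no edge of `RM_n^(r)` spans all of them is at most
`exp(−(1/(2r)^r)·t^r/n^(r−1))`. -/
theorem spanning_edge_probability (r t n : ℕ) (hr : 2 ≤ r) (ht : 2 * r ≤ t) (hn : t ≤ n)
    (W : Fin r → Finset ℕ)
    (hsub : ∀ i, W i ⊆ Finset.Icc 1 (r * n))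
    (hdisj : ∀ i j, i ≠ j → Disjoint (W i) (W j))
    (hcard : ∀ i, (W i).card = t) :
    prob r n (fun M => ¬ ∃ e ∈ M, ∀ i, (e ∩ W i).card = 1)
      ≤ Real.exp (-(1 / (2 * (r : ℝ)) ^ r * ((t : ℝ) ^ r / (n : ℝ) ^ (r - 1)))) :=
  spanning_edge_probability_general (by omega) (by omega) W hsub hdisj fun i => (hcard i).ge
end
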